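/- Let n ≥ 3 and let c_S > 0 be a constant such that the Sobolev inequality c_S·(∫_{ℝⁿ} |φ|^{2n/(n-2)} dx)^{(n-2)/n} ≤ ∫_{ℝⁿ} |∇φ|² dx holds for every smooth compactly supported function φ on ℝⁿ. Let f : ℝⁿ → ℝ be a continuous function whose negative part f₋ = max(-f, 0) satisfies (∫_{ℝⁿ} |f₋|^{n/2} dx)^{2/n} ≤ c_S/2. Then every smooth, compactly supported function ζ : ℝⁿ → ℝ satisfying Δζ - f·ζ = 0 on ℝⁿ is identically zero. -/

import Mathlib

open MeasureTheory
open scoped BigOperators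

/-- The Euclidean Laplacian `Δu = ∑ i, ∂²u/∂xᵢ²` of a function on `ℝⁿ`. -/
noncomputable def euclideanLaplacian {n : ℕ} (u : EuclideanSpace ℝ (Fin n) → ℝ)
    (x : EuclideanSpace ℝ (Fin n)) : ℝ :=
  ∑ i : Fin n,
    fderiv ℝ (fun y => fderiv ℝ u y (EuclideanSpace.single i 1)) x
      (EuclideanSpace.single i 1)

namespace CarlemanAux

/-- Partial derivative in direction `i`. -/
noncomputable def D {n : ℕ} (i : Fin n) (u : EuclideanSpace ℝ (Fin n) → ℝ)
    (x : EuclideanSpace ℝ (Fin n)) : ℝ :=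
  fderiv ℝ u x (EuclideanSpace.single i 1)

variable {n : ℕ}

lemma smooth_D (i : Fin n) {u : EuclideanSpace ℝ (Fin n) → ℝ}
    (hu : ContDiff ℝ (⊤ : ℕ∞) u) : ContDiff ℝ (⊤ : ℕ∞) (D i u) := by
  have h : ContDiff ℝ (⊤ : ℕ∞) (fderiv ℝ u) := hu.fderiv_right (by simp)
  exact h.clm_apply contDiff_const

lemma supp_D (i : Fin n) {u : EuclideanSpace ℝ (Fin n) → ℝ}
    (hu : HasCompactSupport u) : HasCompactSupport (D i u) :=
  hu.fderiv_apply (𝕜 := ℝ) _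

lemma D_mul (i : Fin n) {u v : EuclideanSpace ℝ (Fin n) → ℝ}
    (hu : ContDiff ℝ (⊤ : ℕ∞) u) (hv : ContDiff ℝ (⊤ : ℕ∞) v)
    (x : EuclideanSpace ℝ (Fin n)) :
    D i (fun y => u y * v y) x = u x * D i v x + v x * D i u x := by
  unfold D
  rw [fderiv_fun_mul (hu.differentiable (by simp) x) (hv.differentiable (by simp) x)]
  simp

lemma D_comm (i j : Fin n) {u : EuclideanSpace ℝ (Fin n) → ℝ}
    (hu : ContDiff ℝ (⊤ : ℕ∞) u) (x : EuclideanSpace ℝ (Fin n)) :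
    D i (D j u) x = D j (D i u) x := by
  have h : ContDiff ℝ (⊤ : ℕ∞) (fderiv ℝ u) := hu.fderiv_right (by simp)
  have hs : IsSymmSndFDerivAt ℝ u x :=
    hu.contDiffAt.isSymmSndFDerivAt (by
      simp only [minSmoothness_of_isRCLikeNormedField]
      exact WithTop.coe_le_coe.2 (le_top : (2 : ℕ∞) ≤ ⊤))
  have key : ∀ a b : EuclideanSpace ℝ (Fin n),
      fderiv ℝ (fun y => fderiv ℝ u y a) x b = fderiv ℝ (fderiv ℝ u) x b a := by
    intro a b
    rw [fderiv_clm_apply (h.differentiable (by simp) x) (by fun_prop)]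
    simp
  unfold D
  rw [key, key]
  exact hs _ _

lemma ibp (i : Fin n) {u v : EuclideanSpace ℝ (Fin n) → ℝ}
    (hu : ContDiff ℝ (⊤ : ℕ∞) u) (hv : ContDiff ℝ (⊤ : ℕ∞) v) (hvs : HasCompactSupport v) :
    ∫ x, u x * D i v x = - ∫ x, D i u x * v x := by
  unfold D
  apply integral_mul_fderiv_eq_neg_fderiv_mul_of_integrable
  · exact ((smooth_D i hu).continuous.mul hv.continuous).integrable_of_hasCompactSupport
      hvs.mul_left
  · exact (hu.continuous.mul (smooth_D i hv).continuous).integrable_of_hasCompactSupport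
      (supp_D i hvs).mul_left
  · exact (hu.continuous.mul hv.continuous).integrable_of_hasCompactSupport hvs.mul_left
  · exact fun x _ => hu.differentiable (by simp) x
  · exact fun x _ => hv.differentiable (by simp) x

lemma int_self (i : Fin n) {u : EuclideanSpace ℝ (Fin n) → ℝ}
    (hu : ContDiff ℝ (⊤ : ℕ∞) u) (hus : HasCompactSupport u) :
    ∫ x, u x * D i u x = 0 := by
  have h := ibp i hu hu hus
  have h2 : ∫ x, D i u x * u x = ∫ x, u x * D i u x := by simp only [mul_comm]
  linarith

lemma int_lap (i j : Fin n) {u : EuclideanSpace ℝ (Fin n) → ℝ}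
    (hu : ContDiff ℝ (⊤ : ℕ∞) u) (hus : HasCompactSupport u) :
    ∫ x, D j u x * D i (D i u) x = 0 := by
  rw [ibp i (smooth_D j hu) (smooth_D i hu) (supp_D i hus)]
  have : ∀ x, D i (D j u) x * D i u x = D i u x * D j (D i u) x := by
    intro x; rw [D_comm i j hu x, mul_comm]
  simp only [this]
  rw [int_self j (smooth_D i hu) (supp_D i hus), neg_zero]

lemma D_coord (i j : Fin n) (x : EuclideanSpace ℝ (Fin n)) :
    D i (fun y : EuclideanSpace ℝ (Fin n) => y j) x = if i = j then 1 else 0 := by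
  unfold D
  have : (fun y : EuclideanSpace ℝ (Fin n) => y j) =
      (EuclideanSpace.proj j : EuclideanSpace ℝ (Fin n) →L[ℝ] ℝ) := rfl
  rw [this, ContinuousLinearMap.fderiv]
  simp [eq_comm]

lemma smooth_coord (j : Fin n) :
    ContDiff ℝ (⊤ : ℕ∞) (fun y : EuclideanSpace ℝ (Fin n) => y j) :=
  (EuclideanSpace.proj j : EuclideanSpace ℝ (Fin n) →L[ℝ] ℝ).contDiff

lemma smooth_exp (j : Fin n) (t : ℝ) :
    ContDiff ℝ (⊤ : ℕ∞) (fun y : EuclideanSpace ℝ (Fin n) => Real.exp (t * y j)) :=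
  (contDiff_const.mul (smooth_coord j)).exp

lemma D_exp (i j : Fin n) (t : ℝ) (x : EuclideanSpace ℝ (Fin n)) :
    D i (fun y : EuclideanSpace ℝ (Fin n) => Real.exp (t * y j)) x
      = Real.exp (t * x j) * (t * if i = j then 1 else 0) := by
  have hd : DifferentiableAt ℝ (fun y : EuclideanSpace ℝ (Fin n) => y j) x :=
    (smooth_coord j).differentiable (by simp) x
  rw [← D_coord i j x]
  unfold D
  rw [fderiv_exp (hd.const_mul t), fderiv_const_mul hd]
  simp

/-- Conjugated second derivative. -/
lemma D_D_exp (i j : Fin n) (t : ℝ) {w : EuclideanSpace ℝ (Fin n) → ℝ}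
    (hw : ContDiff ℝ (⊤ : ℕ∞) w) (x : EuclideanSpace ℝ (Fin n)) :
    D i (D i (fun y => Real.exp (t * y j) * w y)) x
      = Real.exp (t * x j) * (D i (D i w) x
        + if i = j then 2 * t * D j w x + t ^ 2 * w x else 0) := by
  have h1 : D i (fun y => Real.exp (t * y j) * w y)
      = fun y => Real.exp (t * y j) * (D i w y + (t * if i = j then 1 else 0) * w y) := by
    funext y
    rw [D_mul i (smooth_exp j t) hw, D_exp]
    ring
  have h3 : D i (fun y => D i w y + (t * if i = j then 1 else 0) * w y) x
      = D i (D i w) x + (t * if i = j then 1 else 0) * D i w x := by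
    conv_lhs => unfold D
    have hd := hw.differentiable (by simp) x
    have hd2 := (smooth_D i hw).differentiable (by simp) x
    rw [fderiv_fun_add (f := fun y => fderiv ℝ w y (EuclideanSpace.single i 1)) hd2
      (hd.const_mul _), fderiv_const_mul hd]
    rfl
  rw [h1, D_mul i (smooth_exp j t) ((smooth_D i hw).add (contDiff_const.mul hw)), h3, D_exp]
  split_ifs with h
  · subst h; ring
  · ring

theorem main (j : Fin n) {f ζ : EuclideanSpace ℝ (Fin n) → ℝ} (hf : Continuous f)
    (hζ : ContDiff ℝ (⊤ : ℕ∞) ζ) (hs : HasCompactSupport ζ)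
    (heq : ∀ x, ∑ i, D i (D i ζ) x = f x * ζ x) : ζ = 0 := by
  obtain ⟨M, hM⟩ := hs.isCompact.exists_bound_of_continuousOn hf.continuousOn
  obtain ⟨R, hR⟩ := hs.isCompact.exists_bound_of_continuousOn
    (smooth_coord j).continuous.continuousOn
  obtain ⟨t, ht⟩ : ∃ t : ℝ, t = |M| * (4 * R ^ 2 + 1) + 1 := ⟨_, rfl⟩
  let w : EuclideanSpace ℝ (Fin n) → ℝ := fun y => Real.exp (t * y j) * ζ y
  have hw : ContDiff ℝ (⊤ : ℕ∞) w := (smooth_exp j t).mul hζ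
  have hws : HasCompactSupport w := hs.mul_left
  have hζw : ζ = fun y => Real.exp (-t * y j) * w y := by
    funext y
    simp only [w]
    rw [← mul_assoc, ← Real.exp_add]
    simp
  -- the conjugated equation
  have hweq : ∀ x, ∑ i, D i (D i w) x - 2 * t * D j w x + t ^ 2 * w x = f x * w x := by
    intro x
    have h := heq x
    rw [hζw] at h
    simp only [D_D_exp _ j (-t) hw] at h
    rw [← Finset.mul_sum, Finset.sum_add_distrib] at h
    simp only [Finset.sum_ite_eq', Finset.mem_univ, if_true] at h
    have hp := Real.exp_pos (-t * x j)
    apply mul_left_cancel₀ hp.ne'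
    linear_combination h
  have hwc := hw.continuous
  have hDc := (smooth_D j hw).continuous
  have hDs := supp_D j hws
  have I1 : Integrable (fun x => w x ^ 2) := by
    have := (hwc.mul hwc).integrable_of_hasCompactSupport (μ := volume) (hws.mul_left (f := w))
    simp only [pow_two]
    exact this
  have I2 : Integrable (fun x => D j w x ^ 2) := by
    have := (hDc.mul hDc).integrable_of_hasCompactSupport (μ := volume)
      (hDs.mul_left (f := D j w))
    simp only [pow_two]
    exact this
  have I3 : Integrable (fun x => w x * D j w x) :=
    (hwc.mul hDc).integrable_of_hasCompactSupport hDs.mul_left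
  have I4 : Integrable (fun x => f x * w x * D j w x) :=
    ((hf.mul hwc).mul hDc).integrable_of_hasCompactSupport hDs.mul_left
  have I5 : ∀ i ∈ Finset.univ, Integrable (fun x => D j w x * D i (D i w) x) := fun i _ =>
    (hDc.mul (smooth_D i (smooth_D i hw)).continuous).integrable_of_hasCompactSupport
      (supp_D i (supp_D i hws)).mul_left
  have I6 : Integrable (fun x => x j * w x * D j w x) :=
    (((smooth_coord j).continuous.mul hwc).mul hDc).integrable_of_hasCompactSupport hDs.mul_left
  have hout : ∀ x, x ∉ tsupport ζ → w x = 0 := by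
    intro x hx
    simp [w, image_eq_zero_of_notMem_tsupport hx]
  -- Energy identity
  have E1 : 2 * t * ∫ x, D j w x ^ 2 = - ∫ x, f x * w x * D j w x := by
    have : ∀ x, f x * w x * D j w x = (∑ i, D j w x * D i (D i w) x)
        - (2 * t) * D j w x ^ 2 + t ^ 2 * (w x * D j w x) := by
      intro x
      rw [← hweq x, ← Finset.mul_sum]; ring
    simp only [this]
    have I7 : Integrable (fun x => (∑ i, D j w x * D i (D i w) x) - (2 * t) * D j w x ^ 2) :=
      (integrable_finsetSum _ I5).sub (I2.const_mul _)
    rw [integral_add I7 (I3.const_mul _),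
      integral_sub (integrable_finsetSum _ I5) (I2.const_mul _),
      integral_finsetSum _ I5, integral_const_mul, integral_const_mul, int_self j hw hws]
    simp only [int_lap _ j hw hws]
    simp
  -- Poincare
  have E2 : ∫ x, w x ^ 2 = - (2 * ∫ x, x j * w x * D j w x) := by
    have h := ibp j ((smooth_coord j).mul hw) hw hws
    have h2 : ∀ x, D j (fun y : EuclideanSpace ℝ (Fin n) => y j * w y) x * w x
        = x j * w x * D j w x + w x ^ 2 := by
      intro x
      rw [D_mul j (smooth_coord j) hw, D_coord]; simp; ring
    simp only [h2] at h
    rw [integral_add I6 I1] at h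
    linarith
  have P : ∫ x, w x ^ 2 ≤ 4 * R ^ 2 * ∫ x, D j w x ^ 2 := by
    have : - (2 * ∫ x, x j * w x * D j w x)
        ≤ (1 / 2) * (∫ x, w x ^ 2) + 2 * R ^ 2 * ∫ x, D j w x ^ 2 := by
      rw [← integral_const_mul, ← integral_const_mul, ← integral_const_mul, ← integral_neg,
        ← integral_add (I1.const_mul _) (I2.const_mul _)]
      apply integral_mono (I6.const_mul _).neg ((I1.const_mul _).add (I2.const_mul _))
      intro x
      simp only [Pi.neg_apply, Pi.add_apply]
      by_cases hx : x ∈ tsupport ζ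
      · have h1 := hR x hx
        rw [Real.norm_eq_abs] at h1
        have h2 : x j ^ 2 ≤ R ^ 2 := sq_le_sq' (abs_le.1 h1).1 (abs_le.1 h1).2
        nlinarith [sq_nonneg (w x + 2 * x j * D j w x),
          mul_le_mul_of_nonneg_right h2 (sq_nonneg (D j w x))]
      · rw [hout x hx]
        have : 0 ≤ R ^ 2 * D j w x ^ 2 := by positivity
        simp; positivity
    linarith
  have Q : - ∫ x, f x * w x * D j w x
      ≤ |M| * ((∫ x, w x ^ 2) + ∫ x, D j w x ^ 2) := by
    rw [← integral_add I1 I2, ← integral_const_mul, ← integral_neg]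
    apply integral_mono I4.neg ((I1.add I2).const_mul _)
    intro x
    simp only [Pi.neg_apply, Pi.add_apply]
    by_cases hx : x ∈ tsupport ζ
    · have h1 : |f x| ≤ |M| := (hM x hx).trans (le_abs_self M)
      have h2 : -(f x * w x * D j w x) ≤ |f x| * (|w x| * |D j w x|) := by
        rw [← abs_mul, ← abs_mul, mul_assoc]
        exact neg_le_abs _
      have h3 : |w x| * |D j w x| ≤ w x ^ 2 + D j w x ^ 2 := by
        rw [← sq_abs (w x), ← sq_abs (D j w x)]
        nlinarith [sq_nonneg (|w x| - |D j w x|), abs_nonneg (w x), abs_nonneg (D j w x)]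
      exact h2.trans (mul_le_mul h1 h3 (by positivity) (abs_nonneg _))
    · rw [hout x hx]
      simp; positivity
  have hb : 0 ≤ ∫ x, D j w x ^ 2 := integral_nonneg fun x => sq_nonneg _
  have ha : 0 ≤ ∫ x, w x ^ 2 := integral_nonneg fun x => sq_nonneg _
  have hb0 : ∫ x, D j w x ^ 2 = 0 := by
    apply le_antisymm _ hb
    have hPM := mul_le_mul_of_nonneg_left P (abs_nonneg M)
    rw [← E1] at Q
    have h0 : 0 ≤ |M| * (4 * R ^ 2 + 1) * ∫ x, D j w x ^ 2 := by positivity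
    rw [ht] at Q
    nlinarith
  have ha0 : ∫ x, w x ^ 2 = 0 := le_antisymm (by rw [hb0] at P; simpa using P) ha
  have hz : (fun x => w x ^ 2) = 0 :=
    (Continuous.ae_eq_iff_eq (μ := volume) (hwc.pow 2) continuous_const).1
      ((integral_eq_zero_iff_of_nonneg (fun x => sq_nonneg _) I1).1 ha0)
  rw [hζw]
  funext y
  have := congrFun hz y
  simp only [Pi.zero_apply] at this
  simp [pow_eq_zero_iff] at this
  simp [this]

end CarlemanAux

/-- Given the Sobolev inequality with constant `c_S > 0` on `ℝⁿ`, `n ≥ 3`,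
and a continuous `f` whose negative part satisfies `(∫ |f₋|^{n/2})^{2/n} ≤ c_S/2`, every
smooth compactly supported solution `ζ` of `Δζ - fζ = 0` on `ℝⁿ` is identically zero. -/
theorem homogeneous_equation_only_zero_solution {n : ℕ} (hn : 3 ≤ n)
    (c_S : ℝ) (hc : 0 < c_S)
    (hSob : ∀ φ : EuclideanSpace ℝ (Fin n) → ℝ, ContDiff ℝ (⊤ : ℕ∞) φ → HasCompactSupport φ →
      c_S * (∫ x, |φ x| ^ ((2 * (n : ℝ)) / ((n : ℝ) - 2))) ^ (((n : ℝ) - 2) / (n : ℝ))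
        ≤ ∫ x, ‖gradient φ x‖ ^ 2)
    {f : EuclideanSpace ℝ (Fin n) → ℝ} (hf : Continuous f)
    (hfneg : (∫ x, (max (-f x) 0) ^ ((n : ℝ) / 2)) ^ ((2 : ℝ) / (n : ℝ)) ≤ c_S / 2)
    {ζ : EuclideanSpace ℝ (Fin n) → ℝ} (hζ : ContDiff ℝ (⊤ : ℕ∞) ζ)
    (hζsupp : HasCompactSupport ζ)
    (heq : ∀ x : EuclideanSpace ℝ (Fin n), euclideanLaplacian ζ x - f x * ζ x = 0) :
    ζ = 0 := by
  exact CarlemanAux.main (⟨0, by omega⟩ : Fin n) hf hζ hζsupp fun x => sub_eq_zero.1 (heq x)
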